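/- Let λ = (λ₁, …, λₙ) be an n-tuple of positive integers. The following are equivalent: (1) the rectangular simplex Δ(λ₁, …, λₙ) ⊂ ℝⁿ is normal; (2) the rectangular simplex Δ(λ₁, …, λₙ, 0) ⊂ ℝ^{n+1} (the convex hull of {0, λ₁e₁, …, λₙeₙ, 0·e_{n+1}}) is normal; (3) the rectangular simplex Δ(λ₁, …, λₙ, 1) ⊂ ℝ^{n+1} is normal. -/

import Mathlib

/-!
`Δ(λ, 0)` is the copy `Δ(λ) × {0}` of `Δ(λ)`, and `Δ(λ, 1)` is the pyramid of height one over
`Δ(λ)` with apex `eₙ₊₁`. Both operations preserve and reflect normality, whatever the base: the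
base is an exposed face of the pyramid, and normality passes to exposed faces; conversely, a lattice
point of the `k`-th dilation of the pyramid has an integral height `j ≤ k`, and subtracting `j`
copies of the apex leaves a lattice point of the `(k - j)`-th dilation of the base.
-/

/-- A point of `ℝⁿ` is a lattice point if all its coordinates are integers. -/
def IsLatticePoint {n : ℕ} (x : Fin n → ℝ) : Prop := ∀ i, ∃ z : ℤ, x i = (z : ℝ)

/-- The `k`-th dilation `kS = {k • x : x ∈ S}` of a set `S ⊆ ℝⁿ`. -/
def dilate {n : ℕ} (k : ℕ) (P : Set (Fin n → ℝ)) : Set (Fin n → ℝ) :=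
  (fun x => (k : ℝ) • x) '' P

/-- Every lattice point of `kP` is a sum of `k` lattice points of `P`. -/
def IsIDP {n : ℕ} (k : ℕ) (P : Set (Fin n → ℝ)) : Prop :=
  ∀ x ∈ dilate k P, IsLatticePoint x →
    ∃ f : Fin k → (Fin n → ℝ), (∀ i, f i ∈ P ∧ IsLatticePoint (f i)) ∧ x = ∑ i, f i

/-- A polytope is normal if for every `k ≥ 1` every lattice point of `kP`
is a sum of `k` lattice points of `P`. -/
def IsNormal {n : ℕ} (P : Set (Fin n → ℝ)) : Prop := ∀ k : ℕ, 1 ≤ k → IsIDP k P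

/-- A polytope is very ample if there is `k₀` such that for every `k ≥ k₀` every
lattice point of `kP` is a sum of `k` lattice points of `P`. -/
def IsVeryAmple {n : ℕ} (P : Set (Fin n → ℝ)) : Prop :=
  ∃ k₀ : ℕ, ∀ k : ℕ, k₀ ≤ k → IsIDP k P

/-- The rectangular simplex `Δ(λ) = conv{0, λ₁e₁, …, λₙeₙ}`. -/
def rectSimplex {n : ℕ} (lam : Fin n → ℕ) : Set (Fin n → ℝ) :=
  convexHull ℝ (insert 0 (Set.range fun i => Pi.single i ((lam i : ℝ))))

/-- An edge of `P`: a segment between two distinct extreme points of `P`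
which is an extreme subset of `P`. -/
def IsEdge {n : ℕ} (P : Set (Fin n → ℝ)) (v w : Fin n → ℝ) : Prop :=
  v ≠ w ∧ v ∈ P.extremePoints ℝ ∧ w ∈ P.extremePoints ℝ ∧
    IsExtreme ℝ P (segment ℝ v w)

/-- `P` has at least `k` lattice points on every edge. -/
def LPE {n : ℕ} (k : ℕ) (P : Set (Fin n → ℝ)) : Prop :=
  ∀ v w, IsEdge P v w →
    ∃ S : Finset (Fin n → ℝ), k ≤ S.card ∧ ∀ x ∈ S, x ∈ segment ℝ v w ∧ IsLatticePoint x

/-- The normality index: the least `k₀` such that `kP` is normal for all `k ≥ k₀`. -/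
noncomputable def munorm {n : ℕ} (P : Set (Fin n → ℝ)) : ℕ :=
  sInf {k₀ : ℕ | ∀ k : ℕ, k₀ ≤ k → IsNormal (dilate k P)}

/-- Almost 1-normality: with `L = lcm λᵢ`, `Lᵢ = L/λᵢ`, `d = gcd Lᵢ`, the number
`L - d` lies in the additive submonoid of `ℕ` generated by the `Lᵢ`. -/
def IsA1N {n : ℕ} (lam : Fin n → ℕ) : Prop :=
  Finset.univ.lcm lam - Finset.univ.gcd (fun i => Finset.univ.lcm lam / lam i) ∈
    AddSubmonoid.closure (Set.range fun i => Finset.univ.lcm lam / lam i)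

section LatticePoints

variable {m n : ℕ} {P Q : Set (Fin n → ℝ)}

theorem dilate_mono (k : ℕ) (h : P ⊆ Q) : dilate k P ⊆ dilate k Q :=
  Set.image_mono h

theorem dilate_image (L : (Fin m → ℝ) →ₗ[ℝ] (Fin n → ℝ)) (k : ℕ) (P : Set (Fin m → ℝ)) :
    dilate k (L '' P) = L '' dilate k P := by
  simp only [dilate, Set.image_image, map_smul]

theorem isLatticePoint_single_one (i : Fin n) : IsLatticePoint (Pi.single i 1) := fun j =>
  ⟨Pi.single (M := fun _ => ℤ) i 1 j, by simp [Pi.single_apply]⟩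

theorem isIDP_zero (P : Set (Fin n → ℝ)) : IsIDP 0 P := by
  rintro _ ⟨y, -, rfl⟩ -
  exact ⟨Fin.elim0, fun i => i.elim0, by simp⟩

end LatticePoints

section LinearImage

variable {m n : ℕ} {L : (Fin m → ℝ) →ₗ[ℝ] (Fin n → ℝ)}

theorem isIDP_image_iff (hinj : Function.Injective L)
    (hL : ∀ x, IsLatticePoint (L x) ↔ IsLatticePoint x) {k : ℕ} {P : Set (Fin m → ℝ)} :
    IsIDP k (L '' P) ↔ IsIDP k P := by
  constructor
  · intro h x hx hxl
    obtain ⟨f, hf, hsum⟩ :=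
      h (L x) (dilate_image L k P ▸ Set.mem_image_of_mem L hx) ((hL x).2 hxl)
    choose g hg hgf using fun i => (hf i).1
    refine ⟨g, fun i => ⟨hg i, (hL _).1 (hgf i ▸ (hf i).2)⟩, hinj ?_⟩
    simp only [hsum, map_sum, hgf]
  · intro h x hx hxl
    rw [dilate_image] at hx
    obtain ⟨y, hy, rfl⟩ := hx
    obtain ⟨f, hf, rfl⟩ := h y hy ((hL y).1 hxl)
    exact ⟨fun i => L (f i),
      fun i => ⟨Set.mem_image_of_mem L (hf i).1, (hL _).2 (hf i).2⟩, map_sum L f _⟩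

theorem isNormal_image_iff (hinj : Function.Injective L)
    (hL : ∀ x, IsLatticePoint (L x) ↔ IsLatticePoint x) {P : Set (Fin m → ℝ)} :
    IsNormal (L '' P) ↔ IsNormal P :=
  forall₂_congr fun _ _ => isIDP_image_iff hinj hL

end LinearImage

section ExposedFace

variable {n : ℕ} {P F : Set (Fin n → ℝ)}

theorem IsIDP.of_isExposed {k : ℕ} (hF : IsExposed ℝ P F) (h : IsIDP k P) : IsIDP k F := by
  intro x hx hxl
  obtain ⟨f, hf, hsum⟩ := h x (dilate_mono k hF.subset hx) hxl
  obtain ⟨y, hy, rfl⟩ := hx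
  obtain ⟨l, rfl⟩ := hF ⟨y, hy⟩
  have hle : ∀ i ∈ Finset.univ, l (f i) ≤ l y := fun i _ => hy.2 _ (hf i).1
  have hsum_eq : ∑ i, l (f i) = ∑ _i : Fin k, l y := by
    simpa using (congrArg l hsum).symm
  have hmax : ∀ i, l (f i) = l y := fun i =>
    (Finset.sum_eq_sum_iff_of_le hle).1 hsum_eq i (Finset.mem_univ i)
  exact ⟨f, fun i => ⟨⟨(hf i).1, fun z hz => (hy.2 z hz).trans_eq (hmax i).symm⟩, (hf i).2⟩, hsum⟩

theorem IsNormal.of_isExposed (hF : IsExposed ℝ P F) (h : IsNormal P) : IsNormal F :=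
  fun k hk => (h k hk).of_isExposed hF

end ExposedFace

section SnocZero

variable {n : ℕ}

/-- The embedding `ℝⁿ → ℝⁿ⁺¹`, `y ↦ (y, 0)`, as a linear map. -/
def snocZero (n : ℕ) : (Fin n → ℝ) →ₗ[ℝ] (Fin (n + 1) → ℝ) where
  toFun y := Fin.snoc y 0
  map_add' y z := by ext i; cases i using Fin.lastCases <;> simp
  map_smul' c y := by ext i; cases i using Fin.lastCases <;> simp

@[simp]
theorem snocZero_castSucc (y : Fin n → ℝ) (i : Fin n) : snocZero n y i.castSucc = y i :=
  Fin.snoc_castSucc (α := fun _ => ℝ) ..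

@[simp]
theorem snocZero_last (y : Fin n → ℝ) : snocZero n y (Fin.last n) = 0 :=
  Fin.snoc_last (α := fun _ => ℝ) ..

theorem snocZero_injective : Function.Injective (snocZero n) := fun y z h => by
  ext i
  simpa using congrFun h i.castSucc

theorem snocZero_single (i : Fin n) (a : ℝ) :
    snocZero n (Pi.single i a) = Pi.single i.castSucc a := by
  ext j
  cases j using Fin.lastCases <;> simp [Pi.single_apply]

theorem isLatticePoint_snocZero_iff {y : Fin n → ℝ} :
    IsLatticePoint (snocZero n y) ↔ IsLatticePoint y := by
  have hzero : ∃ z : ℤ, (0 : ℝ) = z := ⟨0, by simp⟩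
  simp [IsLatticePoint, Fin.forall_fin_succ', hzero]

theorem isNormal_snocZero_image_iff {P : Set (Fin n → ℝ)} :
    IsNormal (snocZero n '' P) ↔ IsNormal P :=
  isNormal_image_iff snocZero_injective fun _ => isLatticePoint_snocZero_iff

end SnocZero

section LatticePyramid

variable {n : ℕ} {P : Set (Fin n → ℝ)}

/-- The pyramid of height one over `P`: the union of the segments joining the apex `eₙ₊₁` to the
points of `P × {0}`. For convex nonempty `P` this is the convex hull of `P × {0}` and the apex. -/
def latticePyramid (P : Set (Fin n → ℝ)) : Set (Fin (n + 1) → ℝ) :=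
  convexJoin ℝ {Pi.single (Fin.last n) 1} (snocZero n '' P)

theorem mem_latticePyramid_iff {x : Fin (n + 1) → ℝ} :
    x ∈ latticePyramid P ↔ ∃ y ∈ P, ∃ a b : ℝ, 0 ≤ a ∧ 0 ≤ b ∧ a + b = 1 ∧
      a • Pi.single (Fin.last n) 1 + b • snocZero n y = x := by
  simp [latticePyramid, segment]

theorem snocZero_mem_latticePyramid {y : Fin n → ℝ} (hy : y ∈ P) :
    snocZero n y ∈ latticePyramid P :=
  mem_latticePyramid_iff.2 ⟨y, hy, 0, 1, le_rfl, zero_le_one, zero_add 1, by simp⟩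

theorem apex_mem_latticePyramid (hP : P.Nonempty) :
    Pi.single (Fin.last n) 1 ∈ latticePyramid P :=
  let ⟨y, hy⟩ := hP
  mem_latticePyramid_iff.2 ⟨y, hy, 1, 0, zero_le_one, le_rfl, add_zero 1, by simp⟩

theorem isExposed_snocZero_image_latticePyramid (P : Set (Fin n → ℝ)) :
    IsExposed ℝ (latticePyramid P) (snocZero n '' P) := by
  rintro ⟨_, y₀, hy₀, rfl⟩
  refine ⟨-ContinuousLinearMap.proj (Fin.last n), Set.Subset.antisymm ?_ ?_⟩
  · rintro _ ⟨y, hy, rfl⟩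
    refine ⟨snocZero_mem_latticePyramid hy, fun x hx => ?_⟩
    obtain ⟨z, -, a, b, ha, -, -, rfl⟩ := mem_latticePyramid_iff.1 hx
    simpa using ha
  · rintro x ⟨hx, hmax⟩
    obtain ⟨y, hy, a, b, ha, -, hab, rfl⟩ := mem_latticePyramid_iff.1 hx
    have ha_nonpos : a ≤ 0 := by
      simpa using hmax _ (snocZero_mem_latticePyramid hy₀)
    obtain rfl : a = 0 := le_antisymm ha_nonpos ha
    obtain rfl : b = 1 := by simpa using hab
    exact ⟨y, hy, by simp⟩

theorem exists_eq_snocZero_add_of_mem_dilate_latticePyramid {k : ℕ} {x : Fin (n + 1) → ℝ}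
    (hx : x ∈ dilate k (latticePyramid P)) (hxl : IsLatticePoint x) :
    ∃ m j : ℕ, m + j = k ∧ ∃ y ∈ dilate m P, IsLatticePoint y ∧
      x = snocZero n y + j • Pi.single (Fin.last n) 1 := by
  obtain ⟨_, hx', rfl⟩ := hx
  obtain ⟨y, hy, a, b, ha, hb, hab, rfl⟩ := mem_latticePyramid_iff.1 hx'
  obtain ⟨z, hz⟩ : ∃ z : ℤ, k * a = z := by simpa using hxl (Fin.last n)
  have hz_nonneg : 0 ≤ z := by
    have : (0 : ℝ) ≤ z := hz ▸ by positivity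
    exact_mod_cast this
  lift z to ℕ using hz_nonneg with j
  replace hz : k * a = j := by exact_mod_cast hz
  have hjk : j ≤ k := by
    have : (j : ℝ) ≤ k := hz ▸ mul_le_of_le_one_right k.cast_nonneg (by linarith)
    exact_mod_cast this
  obtain ⟨m, rfl⟩ := Nat.exists_eq_add_of_le' hjk
  have hm : ((m + j : ℕ) : ℝ) * b = m := by
    push_cast at hz ⊢
    linear_combination (m + j : ℝ) * hab - hz
  have hx_eq : ((m + j : ℕ) : ℝ) • (a • Pi.single (Fin.last n) 1 + b • snocZero n y) =
      snocZero n ((m : ℝ) • y) + j • Pi.single (Fin.last n) 1 := by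
    rw [smul_add, smul_smul, smul_smul, hz, hm, map_smul, Nat.cast_smul_eq_nsmul ℝ j]
    exact add_comm _ _
  refine ⟨m, j, rfl, (m : ℝ) • y, Set.mem_image_of_mem _ hy, fun i => ?_, hx_eq⟩
  rw [hx_eq] at hxl
  simpa using hxl i.castSucc

theorem isIDP_latticePyramid {k : ℕ} (h : ∀ m ≤ k, IsIDP m P) : IsIDP k (latticePyramid P) := by
  intro x hx hxl
  have hP : P.Nonempty := by
    obtain ⟨_, hx', -⟩ := hx
    obtain ⟨y, hy, -⟩ := mem_latticePyramid_iff.1 hx'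
    exact ⟨y, hy⟩
  obtain ⟨m, j, rfl, y, hy, hyl, rfl⟩ :=
    exists_eq_snocZero_add_of_mem_dilate_latticePyramid hx hxl
  obtain ⟨f, hf, rfl⟩ := h m (Nat.le_add_right m j) y hy hyl
  refine ⟨Fin.append (fun i => snocZero n (f i)) fun _ => Pi.single (Fin.last n) 1,
    ?_, by simp [Fin.sum_univ_add]⟩
  simp only [Fin.forall_fin_add, Fin.append_left, Fin.append_right]
  exact ⟨fun i => ⟨snocZero_mem_latticePyramid (hf i).1, isLatticePoint_snocZero_iff.2 (hf i).2⟩,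
    fun _ => ⟨apex_mem_latticePyramid hP, isLatticePoint_single_one _⟩⟩

theorem isNormal_latticePyramid_iff : IsNormal (latticePyramid P) ↔ IsNormal P := by
  refine ⟨fun h => isNormal_snocZero_image_iff.1
    (h.of_isExposed (isExposed_snocZero_image_latticePyramid P)), fun h k _ => ?_⟩
  refine isIDP_latticePyramid fun m _ => ?_
  rcases m.eq_zero_or_pos with rfl | hm
  · exact isIDP_zero P
  · exact h m hm

end LatticePyramid

section RectSimplex

variable {n : ℕ} (lam : Fin n → ℕ)

theorem insert_zero_range_single_snoc (a : ℕ) :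
    (insert 0 (Set.range fun i => Pi.single i ((Fin.snoc lam a : Fin (n + 1) → ℕ) i : ℝ)) :
      Set (Fin (n + 1) → ℝ)) =
    insert (Pi.single (Fin.last n) (a : ℝ))
      (snocZero n '' insert 0 (Set.range fun i => Pi.single i (lam i : ℝ))) := by
  rw [Set.image_insert_eq, map_zero, Set.insert_comm, ← Set.range_comp]
  congr 1
  ext x
  simp [Fin.exists_fin_succ', snocZero_single, or_comm, eq_comm]

theorem rectSimplex_snoc_zero :
    rectSimplex (Fin.snoc lam 0 : Fin (n + 1) → ℕ) = snocZero n '' rectSimplex lam := by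
  rw [rectSimplex, rectSimplex, insert_zero_range_single_snoc, Nat.cast_zero, Pi.single_zero,
    Set.insert_eq_of_mem, LinearMap.image_convexHull]
  exact ⟨0, Set.mem_insert _ _, map_zero _⟩

theorem rectSimplex_snoc_one :
    rectSimplex (Fin.snoc lam 1 : Fin (n + 1) → ℕ) = latticePyramid (rectSimplex lam) := by
  rw [rectSimplex, rectSimplex, latticePyramid, insert_zero_range_single_snoc, Nat.cast_one,
    convexHull_insert ((Set.insert_nonempty _ _).image _), LinearMap.image_convexHull]

end RectSimplex

/-- `Δ(λ₁, …, λₙ)` is normal iff `Δ(λ₁, …, λₙ, 0)` is normal iff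
`Δ(λ₁, …, λₙ, 1)` is normal. -/
theorem stmt_8 (n : ℕ) (lam : Fin n → ℕ) (hlam : ∀ i, 0 < lam i) :
    (IsNormal (rectSimplex lam) ↔ IsNormal (rectSimplex (Fin.snoc lam 0))) ∧
    (IsNormal (rectSimplex lam) ↔ IsNormal (rectSimplex (Fin.snoc lam 1))) := by
  rw [rectSimplex_snoc_zero, rectSimplex_snoc_one]
  exact ⟨isNormal_snocZero_image_iff.symm, isNormal_latticePyramid_iff.symm⟩
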